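/- arXiv:2510.02113 — 3 statements merged into one kernel-verified Lean document; each statement's English description precedes it below -/
import Mathlib

section
/- Let G be a DAG containing no active cycle and let T = x_0 ⇄ x_1 ⇄ ⋯ ⇄ x_{n+1} (n ≥ 0) be a trail in G. If T is a shortest trail between x_0 and x_{n+1} activated by the empty set, then T has no chords. -/
open scoped Classical

/-- `E` is the arc relation of a (finite) directed acyclic graph: there are no
directed cycles (hence also no loops and no pairs of opposite arcs). -/
def IsDAG {V : Type*} (E : V → V → Prop) : Prop :=
  ∀ v : V, ¬ Relation.TransGen E v v

/-- `d` is a descendant of `v`: there is a (nonempty) directed path from `v` to `d`. -/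
def Desc {V : Type*} (E : V → V → Prop) (v d : V) : Prop :=
  Relation.TransGen E v d

/-- A trail: a sequence of `len + 1` pairwise distinct nodes
`f 0, f 1, …, f len`, consecutive ones joined by an arc of `E`
in one of the two possible directions.  Its length is `len`. -/
structure Trail (V : Type*) (E : V → V → Prop) where
  len : ℕ
  f : ℕ → V
  arcs : ∀ i, i < len → E (f i) (f (i + 1)) ∨ E (f (i + 1)) (f i)
  inj : ∀ i, i ≤ len → ∀ j, j ≤ len → f i = f j → i = j

namespace Trail

variable {V : Type*} {E : V → V → Prop}

/-- The trail has a converging connection at the interior index `i`: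
`f (i-1) → f i ← f (i+1)`. -/
def ConvAt (T : Trail V E) (i : ℕ) : Prop :=
  0 < i ∧ i < T.len ∧ E (T.f (i - 1)) (T.f i) ∧ E (T.f (i + 1)) (T.f i)

/-- The trail is activated by `Z`: every interior converging node is in `Z` or has a
descendant in `Z`, and every interior non-converging node is not in `Z`. -/
def ActivatedBy (T : Trail V E) (Z : Set V) : Prop :=
  ∀ i, 0 < i → i < T.len →
    (T.ConvAt i → (T.f i ∈ Z ∨ ∃ d ∈ Z, Desc E (T.f i) d)) ∧
    (¬ T.ConvAt i → T.f i ∉ Z)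

/-- The trail has a chord: an arc of `E` between two non-consecutive nodes. -/
def HasChord (T : Trail V E) : Prop :=
  ∃ i j, i + 1 < j ∧ j ≤ T.len ∧ (E (T.f i) (T.f j) ∨ E (T.f j) (T.f i))

end Trail

/-- `E` contains an active cycle: a closed trail
`v ← x 0 ⇄ x 1 ⇄ ⋯ ⇄ x n ⇄ x (n+1) → v` (so `w = x 0` and `z = x (n+1)` are
distinct parents of `v`), with `n ≥ 1`, such that the trail
`x 0 ⇄ ⋯ ⇄ x (n+1)` has no converging connection and the closed trail has no chords. -/
def HasActiveCycle {V : Type*} (E : V → V → Prop) : Prop :=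
  ∃ (v : V) (n : ℕ) (x : ℕ → V),
    1 ≤ n ∧
    E (x 0) v ∧ E (x (n + 1)) v ∧
    (∀ i, i ≤ n + 1 → x i ≠ v) ∧
    (∀ i, i ≤ n + 1 → ∀ j, j ≤ n + 1 → x i = x j → i = j) ∧
    (∀ i, i < n + 1 → E (x i) (x (i + 1)) ∨ E (x (i + 1)) (x i)) ∧
    (∀ i, 0 < i → i < n + 1 → ¬ (E (x (i - 1)) (x i) ∧ E (x (i + 1)) (x i))) ∧
    (∀ i j, i + 1 < j → j ≤ n + 1 → ¬ (i = 0 ∧ j = n + 1) →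
      ¬ E (x i) (x j) ∧ ¬ E (x j) (x i)) ∧
    (∀ i, 1 ≤ i → i ≤ n → ¬ E v (x i) ∧ ¬ E (x i) v)

/-!
A trail activated by `∅` is one without converging connections, so its arcs point backward up to
some node and forward from there on. Replacing the segment between the ends of a chord by the chord
gives a strictly shorter trail, whose only possible converging connections are at the ends of the
chord. But if the chord and the neighbouring arc converged at one end, that neighbouring arc would
orient the whole replaced segment away from this end, and the segment would close a directed cycle
with the chord.
-/

namespace Trail

variable {V : Type*} {E : V → V → Prop} {T : Trail V E} {i j : ℕ}

/-- A trail without converging connections. This is the form in which activation by `∅` is used: it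
mentions no descendants. -/
def ConvFree (T : Trail V E) : Prop :=
  ∀ i, ¬ T.ConvAt i

theorem activatedBy_empty_iff_convFree : T.ActivatedBy ∅ ↔ T.ConvFree := by
  constructor
  · intro hact i hconv
    simpa using (hact i hconv.1 hconv.2.1).1 hconv
  · exact fun hT i _ _ => ⟨fun hconv => absurd hconv (hT i), fun _ => Set.notMem_empty _⟩

theorem convFree_iff_forall_succ :
    T.ConvFree ↔
      ∀ i, i + 1 < T.len → E (T.f i) (T.f (i + 1)) → ¬ E (T.f (i + 2)) (T.f (i + 1)) := by
  constructor
  · exact fun hT i hi hleft hright => hT (i + 1) ⟨i.succ_pos, hi, hleft, hright⟩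
  · rintro hT (_ | i) ⟨hpos, hi, hleft, hright⟩
    · exact hpos.false
    · exact hT i hi hleft hright

theorem ConvFree.arc_forward (hT : T.ConvFree) (harc : E (T.f i) (T.f (i + 1))) (hij : i ≤ j)
    (hj : j < T.len) : E (T.f j) (T.f (j + 1)) := by
  induction j, hij using Nat.le_induction with
  | base => exact harc
  | succ j _ ih =>
    exact (T.arcs (j + 1) hj).resolve_right
      (convFree_iff_forall_succ.1 hT j hj (ih (by omega)))

theorem ConvFree.arc_backward (hT : T.ConvFree) (harc : E (T.f (j + 1)) (T.f j)) (hij : i ≤ j)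
    (hj : j < T.len) : E (T.f (i + 1)) (T.f i) := by
  induction j, hij using Nat.le_induction with
  | base => exact harc
  | succ j _ ih =>
    have hprev : E (T.f (j + 1)) (T.f j) := (T.arcs j (by omega)).resolve_left fun hleft =>
      convFree_iff_forall_succ.1 hT j hj hleft harc
    exact ih hprev (by omega)

theorem ConvFree.transGen_forward (hT : T.ConvFree) (harc : E (T.f i) (T.f (i + 1)))
    (hij : i < j) (hj : j ≤ T.len) : Relation.TransGen E (T.f i) (T.f j) :=
  (transGen_of_succ_of_lt (fun a b => E (T.f a) (T.f b))
    (fun _ hk => hT.arc_forward harc hk.1 (hk.2.trans_le hj)) hij).lift T.f fun _ _ => id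

theorem ConvFree.transGen_backward (hT : T.ConvFree) (harc : E (T.f (j + 1)) (T.f j))
    (hij : i ≤ j) (hj : j < T.len) : Relation.TransGen E (T.f (j + 1)) (T.f i) :=
  (transGen_of_succ_of_gt (fun a b => E (T.f a) (T.f b))
    (fun _ hk => hT.arc_backward harc (Nat.lt_succ_iff.1 hk.2) hj)
    (Nat.lt_succ_of_le hij)).lift T.f fun _ _ => id

/-- The trail obtained by replacing the segment `f i ⇄ ⋯ ⇄ f (d + i + 1)` by an arc between its two
ends. It has `d` nodes fewer than `T`; taking `d` rather than the end index as parameter keeps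
subtraction out of the indices. -/
def shortcut (T : Trail V E) (i d : ℕ) (hd : d + i + 1 ≤ T.len)
    (harc : E (T.f i) (T.f (d + i + 1)) ∨ E (T.f (d + i + 1)) (T.f i)) : Trail V E where
  len := T.len - d
  f k := if k ≤ i then T.f k else T.f (d + k)
  arcs k hk := by
    rcases lt_trichotomy k i with hki | rfl | hki
    · simpa [hki.le, Nat.succ_le_of_lt hki] using T.arcs k (by omega)
    · simpa [← add_assoc] using harc
    · simpa [hki.not_ge, (Nat.lt_succ_of_lt hki).not_ge, ← add_assoc] using
        T.arcs (d + k) (by omega)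
  inj a ha b hb hab := by
    split_ifs at hab <;> have := T.inj _ (by omega) _ (by omega) hab <;> omega

section Shortcut

variable {d k : ℕ} {hd : d + i + 1 ≤ T.len}
  {harc : E (T.f i) (T.f (d + i + 1)) ∨ E (T.f (d + i + 1)) (T.f i)}

theorem shortcut_len : (T.shortcut i d hd harc).len = T.len - d :=
  rfl

theorem shortcut_f_of_le (hk : k ≤ i) : (T.shortcut i d hd harc).f k = T.f k :=
  if_pos hk

theorem shortcut_f_of_lt (hk : i < k) : (T.shortcut i d hd harc).f k = T.f (d + k) :=
  if_neg hk.not_ge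

theorem shortcut_f_len : (T.shortcut i d hd harc).f (T.shortcut i d hd harc).len = T.f T.len := by
  rw [shortcut_len, shortcut_f_of_lt (by omega), Nat.add_sub_cancel' (by omega)]

theorem ConvFree.shortcut (hdag : IsDAG E) (hT : T.ConvFree) :
    (T.shortcut i d hd harc).ConvFree := by
  refine convFree_iff_forall_succ.2 fun k hk hleft hright => ?_
  rw [shortcut_len] at hk
  obtain hki | rfl | rfl | hki : k + 2 ≤ i ∨ i = k + 1 ∨ k = i ∨ i < k := by omega
  · rw [shortcut_f_of_le (by omega), shortcut_f_of_le (by omega)] at hleft hright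
    exact convFree_iff_forall_succ.1 hT k (by omega) hleft hright
  · rw [shortcut_f_of_le (by omega), shortcut_f_of_le le_rfl] at hleft
    rw [shortcut_f_of_lt (by omega), shortcut_f_of_le le_rfl] at hright
    have hnext : E (T.f (k + 1)) (T.f (k + 2)) := hT.arc_forward hleft (by omega) (by omega)
    have hpath : Relation.TransGen E (T.f (k + 1)) (T.f (d + k + 2)) :=
      hT.transGen_forward hnext (by omega) (by omega)
    exact hdag _ (hpath.tail hright)
  · rw [shortcut_f_of_le le_rfl, shortcut_f_of_lt (by omega)] at hleft
    rw [shortcut_f_of_lt (by omega), shortcut_f_of_lt (by omega)] at hright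
    have hprev : E (T.f (d + k + 1)) (T.f (d + k)) :=
      hT.arc_backward (j := d + k + 1) hright (by omega) (by omega)
    have hpath : Relation.TransGen E (T.f (d + k + 1)) (T.f k) :=
      hT.transGen_backward hprev (by omega) (by omega)
    exact hdag _ (hpath.tail hleft)
  · rw [shortcut_f_of_lt (by omega), shortcut_f_of_lt (by omega)] at hleft hright
    exact convFree_iff_forall_succ.1 hT (d + k) (by omega) hleft hright

end Shortcut

end Trail

theorem shortest_empty_activated_trail_no_chord_general
    {V : Type*} (E : V → V → Prop) (hdag : IsDAG E) (T : Trail V E)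
    (hact : T.ActivatedBy (∅ : Set V))
    (hmin : ∀ T' : Trail V E, T'.f 0 = T.f 0 → T'.f T'.len = T.f T.len →
      T'.ActivatedBy (∅ : Set V) → T.len ≤ T'.len) :
    ¬ T.HasChord := by
  rintro ⟨i, j, hij, hj, hchord⟩
  obtain ⟨d, rfl⟩ : ∃ d, j = d + i + 1 := ⟨j - (i + 1), by omega⟩
  have hT : T.ConvFree := Trail.activatedBy_empty_iff_convFree.1 hact
  have hle : T.len ≤ (T.shortcut i d hj hchord).len :=
    hmin _ (Trail.shortcut_f_of_le i.zero_le) Trail.shortcut_f_len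
      (Trail.activatedBy_empty_iff_convFree.2 (hT.shortcut hdag))
  rw [Trail.shortcut_len] at hle
  omega

/-- In a DAG with no active cycle, a shortest trail between its two
endpoints activated by the empty set has no chords. -/
theorem shortest_empty_activated_trail_no_chord
    {V : Type*} [Fintype V] (E : V → V → Prop) (hdag : IsDAG E)
    (hnac : ¬ HasActiveCycle E) (T : Trail V E) (hlen : 1 ≤ T.len)
    (hact : T.ActivatedBy (∅ : Set V))
    (hmin : ∀ T' : Trail V E, T'.f 0 = T.f 0 → T'.f T'.len = T.f T.len →
      T'.ActivatedBy (∅ : Set V) → T.len ≤ T'.len) :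
    ¬ T.HasChord :=
  shortest_empty_activated_trail_no_chord_general E hdag T hact hmin
end

section
/- Let G be a DAG containing no active cycle, let K ⊆ V, and let T = x_0 ⇄ x_1 ⇄ ⋯ ⇄ x_{n+1} be a trail all of whose interior nodes x_1, …, x_n lie in K. If T is a shortest trail between x_0 and x_{n+1} activated by the empty set among trails whose interior nodes all lie in K, then (i) ch(x_0) ∩ ch(x_{n+1}) ⊆ ⋂_{i=1}^{n} ch(x_i), and (ii) for every i = 1, …, n, x_i ∉ ch(x_0) ∩ ch(x_{n+1}). -/
open scoped Classical

/-!
A trail activated by `∅` has no converging connection, so a node lying between two others on it is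
an ancestor of at least one of them. In a DAG, a common child `v` of two nodes of the trail is
therefore neither equal to nor an ancestor of any node between them, since otherwise a directed
cycle would arise. Taking for `v` a node of the trail, this shows that visiting a subsequence of the
nodes never creates a converging connection, so a shortest trail has no chords. And if some node
between two parents of `v` is not a parent of `v`, then the nearest parents of `v` on either side
of it, together with `v`, span an active cycle.
-/

theorem exists_gap_of_not {α : Type*} [LinearOrder α] [LocallyFiniteOrder α] {P : α → Prop}
    {a i b : α} (hai : a ≤ i) (hib : i ≤ b) (ha : P a) (hi : ¬ P i) (hb : P b) :
    ∃ c d, a ≤ c ∧ c < i ∧ i < d ∧ d ≤ b ∧ P c ∧ P d ∧ ∀ k ∈ Set.Ioo c d, ¬ P k := by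
  obtain ⟨c, hc, hc_max⟩ := {k ∈ Finset.Icc a i | P k}.exists_max_image id
    ⟨a, Finset.mem_filter.2 ⟨Finset.mem_Icc.2 ⟨le_rfl, hai⟩, ha⟩⟩
  obtain ⟨d, hd, hd_min⟩ := {k ∈ Finset.Icc i b | P k}.exists_min_image id
    ⟨b, Finset.mem_filter.2 ⟨Finset.mem_Icc.2 ⟨hib, le_rfl⟩, hb⟩⟩
  simp only [Finset.mem_filter, Finset.mem_Icc, id] at hc hc_max hd hd_min
  obtain ⟨⟨hac, hci⟩, hPc⟩ := hc
  obtain ⟨⟨hid, hdb⟩, hPd⟩ := hd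
  refine ⟨c, d, hac, hci.lt_of_ne fun h => hi (h ▸ hPc), hid.lt_of_ne fun h => hi (h ▸ hPd),
    hdb, hPc, hPd, fun k ⟨hck, hkd⟩ hPk => ?_⟩
  rcases le_total k i with hki | hik
  · exact (hc_max k ⟨⟨hac.trans hck.le, hki⟩, hPk⟩).not_gt hck
  · exact (hd_min k ⟨⟨hik, hkd.le.trans hdb⟩, hPk⟩).not_gt hkd

namespace Trail

variable {V : Type*} {E : V → V → Prop} {T : Trail V E}

theorem activatedBy_empty_iff : T.ActivatedBy (∅ : Set V) ↔ ∀ i, ¬ T.ConvAt i := by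
  refine ⟨fun h i hi => ?_, fun h i _ _ => ⟨fun hi => (h i hi).elim, fun _ => id⟩⟩
  simpa using (h i hi.1 hi.2.1).1 hi

section Ancestors

variable {i j k : ℕ}

theorem arc_succ_of_le (hT : T.ActivatedBy (∅ : Set V)) (h : E (T.f i) (T.f (i + 1)))
    (hik : i ≤ k) (hk : k < T.len) : E (T.f k) (T.f (k + 1)) := by
  induction k, hik using Nat.le_induction with
  | base => exact h
  | succ k _ ih =>
    exact (T.arcs (k + 1) hk).resolve_right fun h_conv =>
      activatedBy_empty_iff.1 hT (k + 1) ⟨k.succ_pos, hk, ih (Nat.lt_of_succ_lt hk), h_conv⟩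

theorem arc_pred_of_le (hT : T.ActivatedBy (∅ : Set V)) (hk : k < T.len)
    (h : E (T.f (k + 1)) (T.f k)) (hik : i ≤ k) : E (T.f (i + 1)) (T.f i) := by
  induction k, hik using Nat.le_induction with
  | base => exact h
  | succ k _ ih =>
    refine ih (Nat.lt_of_succ_lt hk) ?_
    exact (T.arcs k (Nat.lt_of_succ_lt hk)).resolve_left fun h_conv =>
      activatedBy_empty_iff.1 hT (k + 1) ⟨k.succ_pos, hk, h_conv, h⟩

theorem transGen_left_or_right (hT : T.ActivatedBy (∅ : Set V)) (hij : i < j) (hjk : j < k)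
    (hk : k ≤ T.len) :
    Relation.TransGen E (T.f j) (T.f i) ∨ Relation.TransGen E (T.f j) (T.f k) := by
  obtain ⟨m, rfl⟩ := Nat.exists_eq_add_one_of_ne_zero (Nat.ne_zero_of_lt hij)
  rcases T.arcs m (by lia) with h | h
  · have h_path : Relation.TransGen (fun a b => E (T.f a) (T.f b)) (m + 1) k :=
      transGen_of_succ_of_lt _ (fun l hl => arc_succ_of_le hT h (by grind) (by grind)) hjk
    exact .inr (h_path.lift T.f fun _ _ => id)
  · have h_path : Relation.TransGen (fun a b => E (T.f a) (T.f b)) (m + 1) i :=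
      transGen_of_succ_of_gt _ (fun l hl => arc_pred_of_le hT (by lia) h (by grind)) hij
    exact .inl (h_path.lift T.f fun _ _ => id)

theorem not_reflTransGen_of_common_child (hdag : IsDAG E) (hT : T.ActivatedBy (∅ : Set V))
    (hij : i ≤ j) (hjk : j ≤ k) (hk : k ≤ T.len) {v : V} (hi : E (T.f i) v)
    (hk' : E (T.f k) v) : ¬ Relation.ReflTransGen E v (T.f j) := by
  intro hvj
  rcases hij.eq_or_lt with rfl | hij
  · exact hdag v (.tail' hvj hi)
  rcases hjk.eq_or_lt with rfl | hjk
  · exact hdag v (.tail' hvj hk')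
  rcases transGen_left_or_right hT hij hjk hk with h | h
  · exact hdag v ((h.trans_right hvj).tail hi)
  · exact hdag v ((h.trans_right hvj).tail hk')

theorem not_arc_and_arc (hdag : IsDAG E) (hT : T.ActivatedBy (∅ : Set V)) (hij : i ≤ j)
    (hjk : j ≤ k) (hk : k ≤ T.len) : ¬ (E (T.f i) (T.f j) ∧ E (T.f k) (T.f j)) :=
  fun ⟨hi, hk'⟩ => not_reflTransGen_of_common_child hdag hT hij hjk hk hi hk' .refl

end Ancestors

section Subtrail

variable {n : ℕ} {φ : ℕ → ℕ}

/-- The trail `T.f (φ 0), …, T.f (φ n)` visiting a subsequence of the nodes of `T`; its arcs may be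
chords of `T`. -/
def subtrail (T : Trail V E) (n : ℕ) (φ : ℕ → ℕ) (hφ : StrictMono φ) (hn : φ n ≤ T.len)
    (harcs : ∀ k < n, E (T.f (φ k)) (T.f (φ (k + 1))) ∨ E (T.f (φ (k + 1))) (T.f (φ k))) :
    Trail V E where
  len := n
  f := T.f ∘ φ
  arcs := harcs
  inj _ hk _ hl h := hφ.injective <|
    T.inj _ ((hφ.monotone hk).trans hn) _ ((hφ.monotone hl).trans hn) h

theorem subtrail_activatedBy_empty (hdag : IsDAG E) (hT : T.ActivatedBy (∅ : Set V))
    (hφ : StrictMono φ) (hn : φ n ≤ T.len)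
    (harcs : ∀ k < n, E (T.f (φ k)) (T.f (φ (k + 1))) ∨ E (T.f (φ (k + 1))) (T.f (φ k))) :
    (T.subtrail n φ hφ hn harcs).ActivatedBy (∅ : Set V) :=
  activatedBy_empty_iff.2 fun k ⟨_, hk, h_left, h_right⟩ =>
    not_arc_and_arc hdag hT (hφ.monotone (Nat.sub_le k 1)) (hφ.monotone k.le_succ)
      ((hφ.monotone hk).trans hn) ⟨h_left, h_right⟩

theorem not_hasChord_of_shortest (hdag : IsDAG E) {K : Set V} (hT : T.ActivatedBy (∅ : Set V))
    (hK : ∀ i, 0 < i → i < T.len → T.f i ∈ K)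
    (hmin : ∀ T' : Trail V E, T'.f 0 = T.f 0 → T'.f T'.len = T.f T.len →
      T'.ActivatedBy (∅ : Set V) → (∀ i, 0 < i → i < T'.len → T'.f i ∈ K) →
      T.len ≤ T'.len) : ¬ T.HasChord := by
  rintro ⟨i, j, hij, hj, h_chord⟩
  let φ : ℕ → ℕ := fun k => if k ≤ i then k else k + (j - i - 1)
  let n := T.len - (j - i - 1)
  have hφ : StrictMono φ := fun a b hab => by grind
  have hφ_zero : φ 0 = 0 := if_pos i.zero_le
  have hφ_n : φ n = T.len := by grind
  have harcs : ∀ k < n,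
      E (T.f (φ k)) (T.f (φ (k + 1))) ∨ E (T.f (φ (k + 1))) (T.f (φ k)) := by
    intro k hk
    rcases eq_or_ne k i with rfl | hki
    · rwa [show φ k = k by grind, show φ (k + 1) = j by grind]
    · rw [show φ (k + 1) = φ k + 1 by grind]
      exact T.arcs (φ k) (by grind)
  have h_len : T.len ≤ n :=
    hmin (T.subtrail n φ hφ hφ_n.le harcs) (congrArg T.f hφ_zero) (congrArg T.f hφ_n)
      (subtrail_activatedBy_empty hdag hT hφ hφ_n.le harcs) fun k hk₀ hk =>
        hK (φ k) (hφ_zero ▸ hφ hk₀) (hφ_n ▸ hφ hk)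
  lia

end Subtrail

theorem hasActiveCycle_of_gap (hdag : IsDAG E) (hT : T.ActivatedBy (∅ : Set V))
    (hchord : ¬ T.HasChord) {a b : ℕ} (hab : a + 1 < b) (hb : b ≤ T.len) {v : V}
    (hav : E (T.f a) v) (hbv : E (T.f b) v) (hgap : ∀ k ∈ Set.Ioo a b, ¬ E (T.f k) v) :
    HasActiveCycle E := by
  obtain ⟨n, rfl⟩ : ∃ n, b = a + (n + 1) := ⟨b - a - 1, by lia⟩
  have h_anc : ∀ k ≤ n + 1, ¬ Relation.ReflTransGen E v (T.f (a + k)) := fun k hk =>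
    not_reflTransGen_of_common_child hdag hT (a.le_add_right k) (by lia) hb hav hbv
  refine ⟨v, n, fun k => T.f (a + k), by lia, hav, hbv, ?ne_apex, ?inj,
    fun k hk => T.arcs (a + k) (by lia), ?no_conv, ?no_chord, ?apex_not_adj⟩
  case ne_apex => exact fun k hk h => h_anc k hk (h ▸ .refl)
  case inj => exact fun k hk l hl h => Nat.add_left_cancel (T.inj _ (by lia) _ (by lia) h)
  case no_conv =>
    exact fun k _ hk => not_arc_and_arc hdag hT (by lia) (by lia) (by lia)
  case no_chord =>
    exact fun k l hkl hl _ =>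
      ⟨fun h => hchord ⟨a + k, a + l, by lia, by lia, .inl h⟩,
        fun h => hchord ⟨a + k, a + l, by lia, by lia, .inr h⟩⟩
  case apex_not_adj =>
    exact fun k hk₀ hk => ⟨fun h => h_anc k (by lia) (.single h), hgap _ ⟨by lia, by lia⟩⟩

end Trail

theorem shortest_empty_activated_trail_common_children_in_K_general
    {V : Type*} {E : V → V → Prop} (hdag : IsDAG E) (hnac : ¬ HasActiveCycle E) {T : Trail V E}
    (hact : T.ActivatedBy (∅ : Set V)) (hchord : ¬ T.HasChord) :
    (∀ v : V, E (T.f 0) v → E (T.f T.len) v →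
      ∀ i, 0 < i → i < T.len → E (T.f i) v) ∧
    (∀ i, 0 < i → i < T.len → ¬ (E (T.f 0) (T.f i) ∧ E (T.f T.len) (T.f i))) := by
  refine ⟨fun v hv₀ hv₁ i _ hi => by_contra fun hiv => hnac ?_,
    fun i _ hi => Trail.not_arc_and_arc hdag hact i.zero_le hi.le le_rfl⟩
  obtain ⟨a, b, -, hai, hib, hb, hav, hbv, hgap⟩ :=
    exists_gap_of_not (P := fun k => E (T.f k) v) i.zero_le hi.le hv₀ hiv hv₁
  exact Trail.hasActiveCycle_of_gap hdag hact hchord (by lia) hb hav hbv hgap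

/-- Statement 2 generalized to trails whose interior nodes all lie in a
subset `K`, shortest among such trails. -/
theorem shortest_empty_activated_trail_common_children_in_K
    {V : Type*} [Fintype V] (E : V → V → Prop) (hdag : IsDAG E)
    (hnac : ¬ HasActiveCycle E) (K : Set V) (T : Trail V E) (hlen : 1 ≤ T.len)
    (hact : T.ActivatedBy (∅ : Set V))
    (hK : ∀ i, 0 < i → i < T.len → T.f i ∈ K)
    (hmin : ∀ T' : Trail V E, T'.f 0 = T.f 0 → T'.f T'.len = T.f T.len →
      T'.ActivatedBy (∅ : Set V) → (∀ i, 0 < i → i < T'.len → T'.f i ∈ K) →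
      T.len ≤ T'.len) :
    (∀ v : V, E (T.f 0) v → E (T.f T.len) v →
      ∀ i, 0 < i → i < T.len → E (T.f i) v) ∧
    (∀ i, 0 < i → i < T.len → ¬ (E (T.f 0) (T.f i) ∧ E (T.f T.len) (T.f i))) :=
  shortest_empty_activated_trail_common_children_in_K_general hdag hnac hact
    (Trail.not_hasChord_of_shortest hdag hact hK hmin)
end

section
/- Let G be a DAG containing no active cycle, let X, Y, Z ⊆ V be disjoint with TRAILS(X,Y,Z) ≠ ∅, and let T be a minimal element of TRAILS(X,Y,Z) with respect to <_TRAIL, with converging nodes c_1, …, c_C, subtrail nodes t^i_j and descendant-path nodes d^i_j. Then every subtrail node t^i_j and every descendant-path node d^i_j lies outside X ∪ Y ∪ Z. -/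
open scoped Classical

/-- A descendant path from `c` to `Z` with `n` intermediate nodes:
`c = d 0 → d 1 → ⋯ → d n → d (n+1) ∈ Z`, with `d j ∉ Z` for all `j ≤ n`. -/
def IsDescPath {V : Type*} (E : V → V → Prop) (Z : Set V) (c : V) (d : ℕ → V) (n : ℕ) :
    Prop :=
  d 0 = c ∧ d (n + 1) ∈ Z ∧ (∀ j, j ≤ n → d j ∉ Z) ∧ (∀ j, j ≤ n → E (d j) (d (j + 1)))

/-- `n_Z(c)`: the least number of intermediate nodes of a descendant path from `c` to `Z`
(this is `0` when `c ∈ Z`, since then no descendant path exists and `sInf ∅ = 0`). -/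
noncomputable def nZ {V : Type*} (E : V → V → Prop) (Z : Set V) (c : V) : ℕ :=
  sInf {n | ∃ d : ℕ → V, IsDescPath E Z c d n}

namespace Trail

variable {V : Type*} {E : V → V → Prop}

/-- The set of (interior) indices of `T` carrying a converging connection. -/
noncomputable def convIdx (T : Trail V E) : Finset ℕ :=
  (Finset.Ioo 0 T.len).filter fun i => T.ConvAt i

/-- The weight vector `(|{c₁,…,c_C} \ Z|, C, Σᵢ n_Z(i), Σᵢ n_t(i))` of a trail,
whose lexicographic comparison induces the order `<_TRAIL`.  (The total length
of the subtrails, `Σᵢ n_t(i)`, equals `len - 1 - C`.) -/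
noncomputable def weight (T : Trail V E) (Z : Set V) : ℕ × ℕ × ℕ × ℕ :=
  ((T.convIdx.filter fun i => T.f i ∉ Z).card,
   T.convIdx.card,
   ∑ i ∈ T.convIdx, nZ E Z (T.f i),
   T.len - 1 - T.convIdx.card)

end Trail

/-- Strict lexicographic order on `ℕ × ℕ × ℕ × ℕ`. -/
def LexLt4 (a b : ℕ × ℕ × ℕ × ℕ) : Prop :=
  a.1 < b.1 ∨ (a.1 = b.1 ∧ (a.2.1 < b.2.1 ∨ (a.2.1 = b.2.1 ∧
    (a.2.2.1 < b.2.2.1 ∨ (a.2.2.1 = b.2.2.1 ∧ a.2.2.2 < b.2.2.2)))))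

/-- `T ∈ TRAILS(X, Y, Z)`: `T` is a trail from a node of `X` to a node of `Y`
activated by `Z`. -/
def InTRAILS {V : Type*} {E : V → V → Prop} (T : Trail V E) (X Y Z : Set V) : Prop :=
  T.f 0 ∈ X ∧ T.f T.len ∈ Y ∧ T.ActivatedBy Z

/-- `T` is a minimal element of `TRAILS(X, Y, Z)` with respect to `<_TRAIL`. -/
def MinimalTrail {V : Type*} {E : V → V → Prop} (T : Trail V E) (X Y Z : Set V) : Prop :=
  InTRAILS T X Y Z ∧
    ∀ T' : Trail V E, InTRAILS T' X Y Z → ¬ LexLt4 (T'.weight Z) (T.weight Z)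

/-!
The weight of a trail depends only on its set of converging nodes and its set of subtrail nodes,
and so does its being activated.  Cutting off the part of a minimal trail before an interior node
`v` gives an activated trail from `v` to `Y` that has lost `v` from one of these two sets.

If `v` is a subtrail node in `X`, the cut trail has smaller weight.  If `v` is a converging node and
its descendant path reaches `x ∈ X`, follow that path, keeping an activated trail from the current
node to `Y`: when the next node lies on the trail, cut there, otherwise prepend it.  The arc to the
next node leaves the current node, so no converging connection is ever created, and the resulting
trail from `x` lacks the converging node `v`.  Reversing the trail exchanges `X` and `Y`.
-/

namespace Trail

variable {V : Type*} {E : V → V → Prop} {T T' : Trail V E} {Z : Set V}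

section Nodes

/-- The converging nodes `c₁, …, c_C` of a trail. -/
noncomputable def convNodes (T : Trail V E) : Finset V :=
  T.convIdx.image T.f

/-- The subtrail nodes `tⁱ_j` of a trail: its interior nodes without converging connection. -/
noncomputable def subtrailNodes (T : Trail V E) : Finset V :=
  (Finset.Ioo 0 T.len \ T.convIdx).image T.f

theorem mem_convIdx {i : ℕ} : i ∈ T.convIdx ↔ T.ConvAt i := by
  simp only [convIdx, Finset.mem_filter, Finset.mem_Ioo, and_iff_right_iff_imp]
  exact fun h => ⟨h.1, h.2.1⟩

theorem mem_convNodes {v : V} : v ∈ T.convNodes ↔ ∃ i, T.ConvAt i ∧ T.f i = v := by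
  simp only [convNodes, Finset.mem_image, mem_convIdx]

theorem mem_subtrailNodes {v : V} :
    v ∈ T.subtrailNodes ↔ ∃ i, (0 < i ∧ i < T.len ∧ ¬ T.ConvAt i) ∧ T.f i = v := by
  simp only [subtrailNodes, Finset.mem_image, Finset.mem_sdiff, Finset.mem_Ioo, mem_convIdx,
    and_assoc]

theorem activatedBy_iff :
    T.ActivatedBy Z ↔ (∀ c ∈ T.convNodes, c ∈ Z ∨ ∃ d ∈ Z, Desc E c d) ∧
      ∀ t ∈ T.subtrailNodes, t ∉ Z := by
  simp only [mem_convNodes, mem_subtrailNodes]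
  constructor
  · intro h
    refine ⟨?_, ?_⟩
    · rintro _ ⟨i, hi, rfl⟩
      exact (h i hi.1 hi.2.1).1 hi
    · rintro _ ⟨i, ⟨h0, hl, hi⟩, rfl⟩
      exact (h i h0 hl).2 hi
  · rintro ⟨hconv, hsub⟩ i h0 hl
    exact ⟨fun hi => hconv _ ⟨i, hi, rfl⟩, fun hi => hsub _ ⟨i, ⟨h0, hl, hi⟩, rfl⟩⟩

theorem ActivatedBy.of_subset (hT : T.ActivatedBy Z) (hconv : T'.convNodes ⊆ T.convNodes)
    (hsub : T'.subtrailNodes ⊆ T.subtrailNodes) : T'.ActivatedBy Z := by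
  rw [activatedBy_iff] at hT ⊢
  exact ⟨fun c hc => hT.1 c (hconv hc), fun t ht => hT.2 t (hsub ht)⟩

end Nodes

section Weight

theorem convIdx_subset_Ioo (T : Trail V E) : T.convIdx ⊆ Finset.Ioo 0 T.len :=
  Finset.filter_subset _ _

theorem injOn_Ioo (T : Trail V E) : Set.InjOn T.f (Finset.Ioo 0 T.len) := by
  intro i hi j hj h
  exact T.inj i (Finset.mem_Ioo.1 hi).2.le j (Finset.mem_Ioo.1 hj).2.le h

theorem injOn_convIdx (T : Trail V E) : Set.InjOn T.f T.convIdx :=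
  T.injOn_Ioo.mono (Finset.coe_subset.2 T.convIdx_subset_Ioo)

theorem card_subtrailNodes (T : Trail V E) :
    T.subtrailNodes.card = T.len - 1 - T.convIdx.card := by
  rw [subtrailNodes,
    Finset.card_image_of_injOn (T.injOn_Ioo.mono (Finset.coe_subset.2 Finset.sdiff_subset)),
    Finset.card_sdiff_of_subset T.convIdx_subset_Ioo, Nat.card_Ioo, Nat.sub_zero]

theorem weight_eq (T : Trail V E) (Z : Set V) :
    T.weight Z = ((T.convNodes.filter (· ∉ Z)).card, T.convNodes.card,
      ∑ c ∈ T.convNodes, nZ E Z c, T.subtrailNodes.card) := by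
  have hfilter : (T.convNodes.filter (· ∉ Z)).card =
      (T.convIdx.filter fun i => T.f i ∉ Z).card := by
    rw [convNodes, Finset.filter_image, Finset.card_image_of_injOn
      (T.injOn_convIdx.mono (Finset.coe_subset.2 (Finset.filter_subset _ _)))]
  rw [weight, hfilter, card_subtrailNodes, convNodes, Finset.card_image_of_injOn T.injOn_convIdx,
    Finset.sum_image T.injOn_convIdx]

theorem weight_lexLt_of_convNodes_ssubset (Z : Set V) (h : T'.convNodes ⊂ T.convNodes) :
    LexLt4 (T'.weight Z) (T.weight Z) := by
  have hfilter := Finset.card_le_card (Finset.filter_subset_filter (· ∉ Z) h.1)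
  have hcard := Finset.card_lt_card h
  simp only [weight_eq, LexLt4]
  omega

theorem weight_lexLt_of_subtrailNodes_ssubset (Z : Set V) (hconv : T'.convNodes ⊆ T.convNodes)
    (hsub : T'.subtrailNodes ⊂ T.subtrailNodes) : LexLt4 (T'.weight Z) (T.weight Z) := by
  have hfilter := Finset.card_le_card (Finset.filter_subset_filter (· ∉ Z) hconv)
  have hcard := Finset.card_le_card hconv
  have hsum := Finset.sum_le_sum_of_subset (f := nZ E Z) hconv
  have hlen := Finset.card_lt_card hsub
  simp only [weight_eq, LexLt4]
  omega

end Weight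

section Reverse

/-- The trail traversed backwards. -/
def reverse (T : Trail V E) : Trail V E where
  len := T.len
  f i := T.f (T.len - i)
  arcs i hi := by
    have h := T.arcs (T.len - (i + 1)) (by omega)
    rw [show T.len - (i + 1) + 1 = T.len - i by omega] at h
    exact h.symm
  inj i hi j hj h := by
    have := T.inj _ (Nat.sub_le _ _) _ (Nat.sub_le _ _) h
    omega

theorem convAt_reverse {i : ℕ} : T.reverse.ConvAt i ↔ T.ConvAt (T.len - i) := by
  simp only [ConvAt, reverse]
  constructor
  · rintro ⟨h0, hl, hpred, hsucc⟩
    refine ⟨by omega, by omega, ?_, ?_⟩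
    · rwa [Nat.sub_sub]
    · rwa [show T.len - i + 1 = T.len - (i - 1) by omega]
  · rintro ⟨h0, hl, hpred, hsucc⟩
    refine ⟨by omega, by omega, ?_, ?_⟩
    · rwa [show T.len - (i - 1) = T.len - i + 1 by omega]
    · rwa [← Nat.sub_sub]

theorem convNodes_reverse (T : Trail V E) : T.reverse.convNodes = T.convNodes := by
  ext v
  simp only [mem_convNodes, convAt_reverse]
  constructor
  · rintro ⟨i, hi, rfl⟩
    exact ⟨T.len - i, hi, rfl⟩
  · rintro ⟨i, hi, rfl⟩
    have hsub : T.len - (T.len - i) = i := Nat.sub_sub_self hi.2.1.le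
    exact ⟨T.len - i, by rwa [hsub], congrArg T.f hsub⟩

theorem subtrailNodes_reverse (T : Trail V E) : T.reverse.subtrailNodes = T.subtrailNodes := by
  ext v
  simp only [mem_subtrailNodes, convAt_reverse]
  constructor
  · rintro ⟨i, ⟨h0, hl, hi⟩, rfl⟩
    have hl : i < T.len := hl
    exact ⟨T.len - i, ⟨by omega, by omega, hi⟩, rfl⟩
  · rintro ⟨i, ⟨h0, hl, hi⟩, rfl⟩
    have hsub : T.len - (T.len - i) = i := Nat.sub_sub_self hl.le
    exact ⟨T.len - i, ⟨by omega, Nat.sub_lt (h0.trans hl) h0, by rwa [hsub]⟩, congrArg T.f hsub⟩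

theorem weight_reverse (T : Trail V E) (Z : Set V) : T.reverse.weight Z = T.weight Z := by
  rw [weight_eq, weight_eq, convNodes_reverse, subtrailNodes_reverse]

end Reverse

section Drop

/-- The part of the trail from index `k` on, for `k ≤ T.len`; for larger `k` it is the junk trail
of length `0` at `T.f k`. -/
def drop (T : Trail V E) (k : ℕ) : Trail V E where
  len := T.len - k
  f i := T.f (k + i)
  arcs i hi := T.arcs (k + i) (by omega)
  inj i hi j hj h := by
    rcases le_or_gt k T.len with hk | hk
    · exact Nat.add_left_cancel (T.inj _ (by omega) _ (by omega) h)
    · omega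

theorem f_len_drop {k : ℕ} (hk : k ≤ T.len) : (T.drop k).f (T.drop k).len = T.f T.len :=
  congrArg T.f (Nat.add_sub_cancel' hk)

theorem convAt_drop {k i : ℕ} : (T.drop k).ConvAt i ↔ 0 < i ∧ T.ConvAt (k + i) := by
  simp only [ConvAt, drop]
  constructor
  · rintro ⟨h0, hl, hpred, hsucc⟩
    exact ⟨h0, by omega, by omega, by rwa [Nat.add_sub_assoc h0], hsucc⟩
  · rintro ⟨h0, -, hl, hpred, hsucc⟩
    exact ⟨h0, by omega, by rwa [← Nat.add_sub_assoc h0], hsucc⟩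

theorem convNodes_drop_subset (T : Trail V E) (k : ℕ) : (T.drop k).convNodes ⊆ T.convNodes := by
  intro v hv
  obtain ⟨i, hi, rfl⟩ := mem_convNodes.1 hv
  exact mem_convNodes.2 ⟨k + i, (convAt_drop.1 hi).2, rfl⟩

theorem subtrailNodes_drop_subset (T : Trail V E) (k : ℕ) :
    (T.drop k).subtrailNodes ⊆ T.subtrailNodes := by
  intro v hv
  obtain ⟨i, ⟨h0, hl, hi⟩, rfl⟩ := mem_subtrailNodes.1 hv
  have hl : i < T.len - k := hl
  exact mem_subtrailNodes.2
    ⟨k + i, ⟨by omega, by omega, fun h => hi (convAt_drop.2 ⟨h0, h⟩)⟩, rfl⟩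

theorem f_zero_notMem_convNodes (T : Trail V E) : T.f 0 ∉ T.convNodes := by
  intro h
  obtain ⟨i, hi, heq⟩ := mem_convNodes.1 h
  exact hi.1.ne' (T.inj i hi.2.1.le 0 (Nat.zero_le _) heq)

theorem f_zero_notMem_subtrailNodes (T : Trail V E) : T.f 0 ∉ T.subtrailNodes := by
  intro h
  obtain ⟨i, ⟨h0, hl, -⟩, heq⟩ := mem_subtrailNodes.1 h
  exact h0.ne' (T.inj i hl.le 0 (Nat.zero_le _) heq)

theorem convNodes_drop_ssubset {k : ℕ} (hk : T.f k ∈ T.convNodes) :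
    (T.drop k).convNodes ⊂ T.convNodes :=
  (Finset.ssubset_iff_of_subset (T.convNodes_drop_subset k)).2
    ⟨T.f k, hk, (T.drop k).f_zero_notMem_convNodes⟩

theorem subtrailNodes_drop_ssubset {k : ℕ} (hk : T.f k ∈ T.subtrailNodes) :
    (T.drop k).subtrailNodes ⊂ T.subtrailNodes :=
  (Finset.ssubset_iff_of_subset (T.subtrailNodes_drop_subset k)).2
    ⟨T.f k, hk, (T.drop k).f_zero_notMem_subtrailNodes⟩

theorem ActivatedBy.drop (hT : T.ActivatedBy Z) (k : ℕ) : (T.drop k).ActivatedBy Z :=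
  hT.of_subset (T.convNodes_drop_subset k) (T.subtrailNodes_drop_subset k)

end Drop

section Cons

variable {w : V} {harc : E w (T.f 0) ∨ E (T.f 0) w} {hw : ∀ i ≤ T.len, T.f i ≠ w}

/-- The trail `w ⇄ f 0 ⇄ ⋯ ⇄ f len`, for a node `w` outside the trail. -/
def cons (w : V) (T : Trail V E) (harc : E w (T.f 0) ∨ E (T.f 0) w)
    (hw : ∀ i ≤ T.len, T.f i ≠ w) : Trail V E where
  len := T.len + 1
  f
    | 0 => w
    | i + 1 => T.f i
  arcs
    | 0, _ => harc
    | i + 1, hi => T.arcs i (Nat.lt_of_succ_lt_succ hi)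
  inj
    | 0, _, 0, _, _ => rfl
    | 0, _, j + 1, hj, h => absurd h.symm (hw j (Nat.le_of_succ_le_succ hj))
    | i + 1, hi, 0, _, h => absurd h (hw i (Nat.le_of_succ_le_succ hi))
    | i + 1, hi, j + 1, hj, h => congrArg (· + 1)
        (T.inj i (Nat.le_of_succ_le_succ hi) j (Nat.le_of_succ_le_succ hj) h)

theorem convAt_cons_succ {i : ℕ} (hi : 0 < i) :
    (T.cons w harc hw).ConvAt (i + 1) ↔ T.ConvAt i := by
  obtain ⟨i, rfl⟩ := Nat.exists_eq_succ_of_ne_zero hi.ne'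
  simp [ConvAt, cons]

theorem not_convAt_cons_one (hwT : ¬ E w (T.f 0)) : ¬ (T.cons w harc hw).ConvAt 1 :=
  fun h => hwT h.2.2.1

theorem convNodes_cons_subset (hwT : ¬ E w (T.f 0)) :
    (T.cons w harc hw).convNodes ⊆ T.convNodes := by
  intro v hv
  obtain ⟨_ | _ | i, hi, rfl⟩ := mem_convNodes.1 hv
  · exact absurd hi.1 (lt_irrefl 0)
  · exact absurd hi (not_convAt_cons_one hwT)
  · exact mem_convNodes.2 ⟨i + 1, (convAt_cons_succ i.succ_pos).1 hi, rfl⟩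

theorem subtrailNodes_cons_subset :
    (T.cons w harc hw).subtrailNodes ⊆ insert (T.f 0) T.subtrailNodes := by
  intro v hv
  obtain ⟨_ | _ | i, ⟨h0, hl, hi⟩, rfl⟩ := mem_subtrailNodes.1 hv
  · exact absurd h0 (lt_irrefl 0)
  · exact Finset.mem_insert_self _ _
  · exact Finset.mem_insert_of_mem <| mem_subtrailNodes.2
      ⟨i + 1, ⟨i.succ_pos, Nat.lt_of_succ_lt_succ hl,
        fun h => hi ((convAt_cons_succ i.succ_pos).2 h)⟩, rfl⟩

theorem ActivatedBy.cons (hT : T.ActivatedBy Z) (hwT : ¬ E w (T.f 0)) (hZ : T.f 0 ∉ Z) :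
    (T.cons w harc hw).ActivatedBy Z := by
  rw [activatedBy_iff] at hT ⊢
  refine ⟨fun c hc => hT.1 c (convNodes_cons_subset hwT hc), fun t ht => ?_⟩
  rcases Finset.mem_insert.1 (subtrailNodes_cons_subset ht) with rfl | ht
  · exact hZ
  · exact hT.2 t ht

end Cons

section Reroute

theorem ActivatedBy.exists_reroute_of_arc [Std.Asymm E] (hT : T.ActivatedBy Z) {w : V}
    (hw : E (T.f 0) w) (hZ : T.f 0 ∉ Z) :
    ∃ T' : Trail V E, T'.f 0 = w ∧ T'.f T'.len = T.f T.len ∧ T'.ActivatedBy Z ∧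
      T'.convNodes ⊆ T.convNodes := by
  by_cases hmem : ∃ k ≤ T.len, T.f k = w
  · obtain ⟨k, hk, rfl⟩ := hmem
    exact ⟨T.drop k, rfl, f_len_drop hk, hT.drop k, T.convNodes_drop_subset k⟩
  · have hfresh : ∀ k ≤ T.len, T.f k ≠ w := fun k hk h => hmem ⟨k, hk, h⟩
    have hback : ¬ E w (T.f 0) := asymm_of E hw
    exact ⟨T.cons w (.inr hw) hfresh, rfl, rfl, hT.cons hback hZ, convNodes_cons_subset hback⟩

theorem ActivatedBy.exists_reroute_of_reflTransGen [Std.Asymm E] (hT : T.ActivatedBy Z) {v : V}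
    (hv : Relation.ReflTransGen (fun a b => E a b ∧ a ∉ Z) (T.f 0) v) :
    ∃ T' : Trail V E, T'.f 0 = v ∧ T'.f T'.len = T.f T.len ∧ T'.ActivatedBy Z ∧
      T'.convNodes ⊆ T.convNodes := by
  induction hv with
  | refl => exact ⟨T, rfl, rfl, hT, Finset.Subset.refl _⟩
  | tail _ hstep ih =>
    obtain ⟨T₁, rfl, hend₁, hact₁, hconv₁⟩ := ih
    obtain ⟨T₂, hstart₂, hend₂, hact₂, hconv₂⟩ := hact₁.exists_reroute_of_arc hstep.1 hstep.2
    exact ⟨T₂, hstart₂, hend₂.trans hend₁, hact₂, hconv₂.trans hconv₁⟩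

end Reroute

end Trail

theorem IsDAG.asymm {V : Type*} {E : V → V → Prop} (hE : IsDAG E) : Std.Asymm E :=
  ⟨fun u _ huv hvu => hE u (.tail (.single huv) hvu)⟩

section Minimal

variable {V : Type*} {E : V → V → Prop} {X Y Z : Set V} {T : Trail V E}

theorem IsDescPath.reflTransGen {c : V} {d : ℕ → V} {n j : ℕ} (hd : IsDescPath E Z c d n)
    (hj : j ≤ n) : Relation.ReflTransGen (fun a b => E a b ∧ a ∉ Z) c (d j) := by
  obtain ⟨rfl, -, hZ, harc⟩ := hd
  induction j with
  | zero => exact .refl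
  | succ j ih => exact (ih (by omega)).tail ⟨harc j (by omega), hZ j (by omega)⟩

theorem InTRAILS.reverse (hT : InTRAILS T X Y Z) : InTRAILS T.reverse Y X Z := by
  obtain ⟨hX, hY, hact⟩ := hT
  refine ⟨hY, ?_, hact.of_subset T.convNodes_reverse.subset T.subtrailNodes_reverse.subset⟩
  simpa only [Trail.reverse, Nat.sub_self] using hX

namespace MinimalTrail

theorem reverse (hT : MinimalTrail T X Y Z) : MinimalTrail T.reverse Y X Z := by
  refine ⟨hT.1.reverse, fun T' hT' => ?_⟩
  rw [T.weight_reverse, ← T'.weight_reverse]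
  exact hT.2 T'.reverse hT'.reverse

theorem notMem_left_of_mem_subtrailNodes (hT : MinimalTrail T X Y Z) {t : V}
    (ht : t ∈ T.subtrailNodes) : t ∉ X := by
  intro hX
  obtain ⟨i, ⟨-, hl, -⟩, rfl⟩ := Trail.mem_subtrailNodes.1 ht
  have hmem : InTRAILS (T.drop i) X Y Z :=
    ⟨hX, Trail.f_len_drop hl.le ▸ hT.1.2.1, hT.1.2.2.drop i⟩
  exact hT.2 _ hmem (Trail.weight_lexLt_of_subtrailNodes_ssubset Z (T.convNodes_drop_subset i)
    (Trail.subtrailNodes_drop_ssubset ht))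

theorem notMem_union_of_mem_subtrailNodes (hT : MinimalTrail T X Y Z) {t : V}
    (ht : t ∈ T.subtrailNodes) : t ∉ X ∪ Y ∪ Z := by
  have hX : t ∉ X := hT.notMem_left_of_mem_subtrailNodes ht
  have hY : t ∉ Y :=
    hT.reverse.notMem_left_of_mem_subtrailNodes (T.subtrailNodes_reverse ▸ ht)
  have hZ : t ∉ Z := (Trail.activatedBy_iff.1 hT.1.2.2).2 t ht
  exact not_or.2 ⟨not_or.2 ⟨hX, hY⟩, hZ⟩

theorem notMem_left_of_reflTransGen [Std.Asymm E] (hT : MinimalTrail T X Y Z) {c v : V}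
    (hc : c ∈ T.convNodes) (hv : Relation.ReflTransGen (fun a b => E a b ∧ a ∉ Z) c v) :
    v ∉ X := by
  intro hX
  obtain ⟨i, hi, rfl⟩ := Trail.mem_convNodes.1 hc
  obtain ⟨T', rfl, hend, hact, hconv⟩ :=
    (hT.1.2.2.drop i).exists_reroute_of_reflTransGen hv
  have hmem : InTRAILS T' X Y Z :=
    ⟨hX, (hend.trans (Trail.f_len_drop hi.2.1.le)) ▸ hT.1.2.1, hact⟩
  exact hT.2 T' hmem (Trail.weight_lexLt_of_convNodes_ssubset Z
    (hconv.trans_ssubset (Trail.convNodes_drop_ssubset hc)))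

theorem notMem_union_of_isDescPath [Std.Asymm E] (hT : MinimalTrail T X Y Z) {c : V}
    (hc : c ∈ T.convNodes) {d : ℕ → V} {n j : ℕ} (hd : IsDescPath E Z c d n) (hj : j ≤ n) :
    d j ∉ X ∪ Y ∪ Z := by
  have hX : d j ∉ X := hT.notMem_left_of_reflTransGen hc (hd.reflTransGen hj)
  have hY : d j ∉ Y :=
    hT.reverse.notMem_left_of_reflTransGen (T.convNodes_reverse ▸ hc) (hd.reflTransGen hj)
  exact not_or.2 ⟨not_or.2 ⟨hX, hY⟩, hd.2.2.1 j hj⟩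

end MinimalTrail

end Minimal

theorem minimal_trail_subtrail_and_descendant_nodes_outside_general
    {V : Type*} {E : V → V → Prop} [Std.Asymm E] {X Y Z : Set V}
    {T : Trail V E} (hT : MinimalTrail T X Y Z) :
    (∀ i, 0 < i → i < T.len → ¬ T.ConvAt i → T.f i ∉ X ∪ Y ∪ Z) ∧
    (∀ i, T.ConvAt i → ∀ (d : ℕ → V) (n : ℕ), IsDescPath E Z (T.f i) d n →
      ∀ j ≤ n, d j ∉ X ∪ Y ∪ Z) :=
  ⟨fun i h0 hl hi => hT.notMem_union_of_mem_subtrailNodes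
      (Trail.mem_subtrailNodes.2 ⟨i, ⟨h0, hl, hi⟩, rfl⟩),
    fun i hi _ _ hd _ hj => hT.notMem_union_of_isDescPath
      (Trail.mem_convNodes.2 ⟨i, hi, rfl⟩) hd hj⟩

/-- For a minimal trail `T` of `TRAILS(X,Y,Z)`, every interior
non-converging (subtrail) node and every intermediate node of a (shortest) descendant
path of a converging node lies outside `X ∪ Y ∪ Z`. -/
theorem minimal_trail_subtrail_and_descendant_nodes_outside
    {V : Type*} [Fintype V] (E : V → V → Prop) (hdag : IsDAG E)
    (hnac : ¬ HasActiveCycle E) (X Y Z : Set V)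
    (hXY : Disjoint X Y) (hXZ : Disjoint X Z) (hYZ : Disjoint Y Z)
    (hne : ∃ T₀ : Trail V E, InTRAILS T₀ X Y Z)
    (T : Trail V E) (hT : MinimalTrail T X Y Z) :
    (∀ i, 0 < i → i < T.len → ¬ T.ConvAt i → T.f i ∉ X ∪ Y ∪ Z) ∧
    (∀ i, T.ConvAt i → ∀ (d : ℕ → V) (n : ℕ), IsDescPath E Z (T.f i) d n →
      (∀ (d' : ℕ → V) (n' : ℕ), IsDescPath E Z (T.f i) d' n' → n ≤ n') →
      ∀ j, 1 ≤ j → j ≤ n → d j ∉ X ∪ Y ∪ Z) := by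
  have := hdag.asymm
  obtain ⟨hsub, hdesc⟩ := minimal_trail_subtrail_and_descendant_nodes_outside_general hT
  exact ⟨hsub, fun i hi d n hd _ j _ hj => hdesc i hi d n hd j hj⟩
end
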